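/- Let g > 0, set s = √(49g² − 4g + 4) (which is well defined since 49g² − 4g + 4 > 0 for all real g), c = (7g − 2 − s)/6, and define ψ(x) = x (1 + c x²)(1 + g x²) exp(−x²/2) for x ∈ ℝ. Then ψ is twice differentiable, ψ(x) → 0 as |x| → ∞, and for all x ∈ ℝ, −ψ''(x) + (x² + λ₄ x²/(1 + g x²)) ψ(x) = E₃ ψ(x), where λ₄ = −g(13g + 6 − s) and E₃ = 11 + λ₄/g = 5 − 13g + s. -/

import Mathlib

/-!
Write `ψ = P · exp (-x²/2)` with `P = x + (c + g) x³ + c g x⁵`. Differentiating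
`P · exp (-x²/2)` replaces `P` by `P' - x P`, so both derivatives are again polynomials times the
Gaussian, which also gives the decay of `ψ`. After cancelling the Gaussian, and because
`P = x (1 + c x²) (1 + g x²)` absorbs the denominator of the potential, the Schrödinger equation
becomes a polynomial identity with three coefficients: that of `x` says `E₃ = 3 - 6 (c + g)`, that
of `x⁵` says `E₃ = 11 + λ₄ / g`, and that of `x³` is twice the quadratic equation
`3c² - 7gc + 2c - 2g = 0`, of which the given `c` is a root since `s² = 49g² - 4g + 4`.
-/

open Real Filter

lemma tendsto_pow_mul_gaussian (n : ℕ) :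
    Tendsto (fun x : ℝ => x ^ n * Real.exp (-x ^ 2 / 2)) (cocompact ℝ) (nhds 0) := by
  have h := tendsto_rpow_abs_mul_exp_neg_mul_sq_cocompact (a := 1 / 2) (by norm_num) (n : ℝ)
  refine squeeze_zero_norm (fun x => le_of_eq ?_) h
  rw [norm_mul, norm_pow, Real.norm_eq_abs, Real.norm_eq_abs, abs_of_pos (Real.exp_pos _),
    Real.rpow_natCast]
  congr 2
  ring

lemma hasDerivAt_mul_gaussian {p : ℝ → ℝ} {p' x : ℝ} (hp : HasDerivAt p p' x) :
    HasDerivAt (fun x : ℝ => p x * Real.exp (-x ^ 2 / 2))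
      ((p' - x * p x) * Real.exp (-x ^ 2 / 2)) x := by
  have h : HasDerivAt (fun x : ℝ => -x ^ 2 / 2) (-x) x := by
    refine ((hasDerivAt_pow 2 x).neg.div_const 2).congr_deriv ?_
    norm_num
    ring
  refine (hp.mul h.exp).congr_deriv ?_
  ring

lemma hasDerivAt_odd_quintic (a b d x : ℝ) :
    HasDerivAt (fun x : ℝ => a * x + b * x ^ 3 + d * x ^ 5)
      (a + 3 * b * x ^ 2 + 5 * d * x ^ 4) x := by
  refine ((((hasDerivAt_id x).const_mul a).add ((hasDerivAt_pow 3 x).const_mul b)).add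
    ((hasDerivAt_pow 5 x).const_mul d)).congr_deriv ?_
  norm_num
  ring

lemma hasDerivAt_even_sextic (a b d e x : ℝ) :
    HasDerivAt (fun x : ℝ => a + b * x ^ 2 + d * x ^ 4 + e * x ^ 6)
      (2 * b * x + 4 * d * x ^ 3 + 6 * e * x ^ 5) x := by
  refine (((((hasDerivAt_pow 2 x).const_mul b).const_add a).add
    ((hasDerivAt_pow 4 x).const_mul d)).add ((hasDerivAt_pow 6 x).const_mul e)).congr_deriv ?_
  norm_num
  ring

/-- Exact third (odd) eigenstate of the Schrödinger equation with rational potential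
`V(x) = x² + λ₄ x²/(1 + g x²)`, `λ₄ = −g(13g + 6 − √(49g² − 4g + 4))`,
giving `E₃ = 11 + λ₄/g = 5 − 13g + √(49g² − 4g + 4)`. -/
theorem stmt_3 (g : ℝ) (hg : 0 < g)
    (s : ℝ) (hs : s = Real.sqrt (49 * g ^ 2 - 4 * g + 4))
    (c : ℝ) (hc : c = (7 * g - 2 - s) / 6)
    (ψ : ℝ → ℝ)
    (hψ : ψ = fun x : ℝ => x * (1 + c * x ^ 2) * (1 + g * x ^ 2) * Real.exp (-x ^ 2 / 2))
    (lam₄ E₃ : ℝ) (hlam : lam₄ = -g * (13 * g + 6 - s)) (hE : E₃ = 11 + lam₄ / g) :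
    (∀ t : ℝ, 0 < 49 * t ^ 2 - 4 * t + 4) ∧
    (Differentiable ℝ ψ ∧ Differentiable ℝ (deriv ψ)) ∧
    Tendsto ψ (cocompact ℝ) (nhds 0) ∧
    (∀ x : ℝ, -(deriv (deriv ψ) x) + (x ^ 2 + lam₄ * x ^ 2 / (1 + g * x ^ 2)) * ψ x
      = E₃ * ψ x) ∧
    E₃ = 5 - 13 * g + s := by
  have hpos : ∀ t : ℝ, 0 < 49 * t ^ 2 - 4 * t + 4 := fun t => by
    nlinarith [sq_nonneg (t - 2), sq_nonneg t]
  have hs2 : s ^ 2 = 49 * g ^ 2 - 4 * g + 4 := by rw [hs, Real.sq_sqrt (hpos g).le]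
  have hquad : 3 * c ^ 2 - 7 * g * c + 2 * c - 2 * g = 0 := by
    rw [hc]
    linear_combination hs2 / 12
  have hE' : E₃ = 5 - 13 * g + s := by
    rw [hE, hlam]
    field_simp
    ring
  have hEc : E₃ = 3 - 6 * (c + g) := by rw [hE', hc]; ring
  have hlamc : lam₄ = g * (-8 - 6 * c - 6 * g) := by rw [hlam, hc]; ring
  have hψ0 : ψ = fun x : ℝ =>
      (1 * x + (c + g) * x ^ 3 + c * g * x ^ 5) * Real.exp (-x ^ 2 / 2) := by
    rw [hψ]
    funext x
    ring
  have hd1 : ∀ x, HasDerivAt ψ ((1 + (3 * (c + g) - 1) * x ^ 2 + (5 * (c * g) - (c + g)) * x ^ 4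
      + -(c * g) * x ^ 6) * Real.exp (-x ^ 2 / 2)) x := fun x => by
    rw [hψ0]
    convert hasDerivAt_mul_gaussian (hasDerivAt_odd_quintic 1 (c + g) (c * g) x) using 1
    ring
  have hderiv : deriv ψ = fun x => (1 + (3 * (c + g) - 1) * x ^ 2
      + (5 * (c * g) - (c + g)) * x ^ 4 + -(c * g) * x ^ 6) * Real.exp (-x ^ 2 / 2) :=
    funext fun x => (hd1 x).deriv
  have hd2 := fun x => hasDerivAt_mul_gaussian (hasDerivAt_even_sextic 1 (3 * (c + g) - 1)
    (5 * (c * g) - (c + g)) (-(c * g)) x)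
  rw [← hderiv] at hd2
  refine ⟨hpos, ⟨fun x => (hd1 x).differentiableAt, fun x => (hd2 x).differentiableAt⟩, ?_, ?_, hE'⟩
  · have h := ((tendsto_pow_mul_gaussian 1).add
      ((tendsto_pow_mul_gaussian 3).const_mul (c + g))).add
      ((tendsto_pow_mul_gaussian 5).const_mul (c * g))
    rw [hψ0]
    convert h using 1
    · funext x
      ring
    · simp
  · intro x
    have hden : 1 + g * x ^ 2 ≠ 0 := by positivity
    have hpot : lam₄ * x ^ 2 / (1 + g * x ^ 2) * ψ x
        = lam₄ * x ^ 2 * (x * (1 + c * x ^ 2)) * Real.exp (-x ^ 2 / 2) := by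
      rw [hψ]
      field_simp
    rw [(hd2 x).deriv, add_mul, hpot, hψ0, hEc, hlamc]
    linear_combination 2 * x ^ 3 * Real.exp (-x ^ 2 / 2) * hquad
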